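/- arXiv:2008.10205 — 2 statements merged into one kernel-verified Lean document; each statement's English description precedes it below -/
import Mathlib

section
/- Let μ be a family of probability measures on the discrete groupoid 𝒢 and let x be a unit. Suppose μ satisfies the Reiter condition at x: for every g ∈ 𝒢^x, lim_{n→∞} ‖g·μ^{*n,s(g)} − μ^{*n,x}‖₁ = 0. Then the Markov operator P_μ^x is Liouville: every f ∈ ℓ∞(𝒢^x) with P_μ^x f = f is a constant function on 𝒢^x. -/
/-!
The operator `P_μ` is dual to right convolution by `μ`: `⟨F, ν * μ⟩ = ⟨P_μ F, ν⟩` for bounded `F`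
and summable `ν`. Hence a bounded harmonic `f` on `𝒢^x` satisfies `⟨f, μ^{*n,x}⟩ = f(x)`, and, since
`P_μ` commutes with left translations, `⟨f, g·μ^{*n,s(g)}⟩ = f(g)`. Subtracting,
`|f(g) - f(x)| ≤ ‖f‖_∞ ‖g·μ^{*m,s(g)} - μ^{*n,x}‖₁` for all `m` and `n`.
-/

open CategoryTheory

/-- The fiber `𝒢^x`: elements of the groupoid with range (target) `x`,
encoded as pairs `⟨z, g⟩` with `g : z ⟶ x`; the source of such an element is `z`. -/
abbrev GpdFiber (Ω : Type*) [Groupoid Ω] (x : Ω) := Σ z : Ω, z ⟶ x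

/-- The convolution `f * μ` of a function `f` on `𝒢^x` with a family of measures `μ`:
`(f*μ)(a) = ∑_{h : s(h)=s(a)} f(a h⁻¹) · μ^{r(h)}(h)`.  Here the product `g h` of groupoid
elements (defined when `s(g) = r(h)`) corresponds to the composite `h ≫ g` of morphisms. -/
noncomputable def convF {Ω : Type*} [Groupoid Ω] {x : Ω} (f : GpdFiber Ω x → ℝ)
    (μ : ∀ y : Ω, GpdFiber Ω y → ℝ) : GpdFiber Ω x → ℝ :=
  fun a => ∑' p : Σ w : Ω, (a.1 ⟶ w), f ⟨p.1, Groupoid.inv p.2 ≫ a.2⟩ * μ p.1 ⟨a.1, p.2⟩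

/-- A family of probability measures on a discrete groupoid: each `μ^x` is a nonnegative
function on `𝒢^x` with total sum `1`. -/
def IsProbFamily {Ω : Type*} [Groupoid Ω] (μ : ∀ y : Ω, GpdFiber Ω y → ℝ) : Prop :=
  (∀ (y : Ω) (p : GpdFiber Ω y), 0 ≤ μ y p) ∧ ∀ y : Ω, HasSum (μ y) 1

/-- The Markov operator `P_μ^x` on bounded functions on `𝒢^x`:
`(P_μ^x f)(g) = ∑_{h ∈ 𝒢^{s(g)}} f(gh) · μ^{s(g)}(h)`. -/
noncomputable def markovOp {Ω : Type*} [Groupoid Ω] {x : Ω}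
    (μ : ∀ y : Ω, GpdFiber Ω y → ℝ) (f : GpdFiber Ω x → ℝ) : GpdFiber Ω x → ℝ :=
  fun g => ∑' h : Σ w : Ω, (w ⟶ g.1), f ⟨h.1, h.2 ≫ g.2⟩ * μ g.1 ⟨h.1, h.2⟩

/-- The point mass `δ_g` at an element `g ∈ 𝒢^x`. -/
noncomputable def diracF {Ω : Type*} [Groupoid Ω] {x : Ω} (g : GpdFiber Ω x) :
    GpdFiber Ω x → ℝ :=
  fun a => letI := Classical.propDecidable (a = g); if a = g then 1 else 0

/-- The translate `g·f` of a function `f` on `𝒢^x` by `g` with `s(g) = x`, `r(g) = y`: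
`(g·f)(a) = f(g⁻¹ a)`. -/
def translateF {Ω : Type*} [Groupoid Ω] {x y : Ω} (g : x ⟶ y) (f : GpdFiber Ω x → ℝ) :
    GpdFiber Ω y → ℝ :=
  fun a => f ⟨a.1, a.2 ≫ Groupoid.inv g⟩

/-- The `n`-fold convolution power `μ^{*n}` of a family of measures (with `μ^{*0}` the
family of point masses at the units, so that `μ^{*1} = μ`, `μ^{*(n+1)} = μ^{*n} * μ`). -/
noncomputable def convPow {Ω : Type*} [Groupoid Ω] (μ : ∀ y : Ω, GpdFiber Ω y → ℝ) :
    ℕ → ∀ y : Ω, GpdFiber Ω y → ℝ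
  | 0 => fun y => diracF (⟨y, 𝟙 y⟩ : GpdFiber Ω y)
  | n + 1 => fun x => convF (convPow μ n x) μ

lemma abs_sub_le_mul_tsum_abs_sub {α : Type*} {f ν ρ : α → ℝ} {C s t : ℝ}
    (hC : ∀ a, |f a| ≤ C) (hν : Summable ν) (hρ : Summable ρ)
    (hs : HasSum (fun a => f a * ν a) s) (ht : HasSum (fun a => f a * ρ a) t) :
    |s - t| ≤ C * ∑' a, |ν a - ρ a| := by
  rw [← tsum_mul_left, ← (hs.sub ht).tsum_eq, ← Real.norm_eq_abs]
  refine tsum_of_norm_bounded ((hν.sub hρ).abs.mul_left C).hasSum fun a => ?_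
  rw [← mul_sub, Real.norm_eq_abs, abs_mul]
  exact mul_le_mul_of_nonneg_right (hC a) (abs_nonneg _)

section Groupoid

variable {Ω : Type*} [Groupoid Ω]

/-- The bijection `(g, h) ↦ (gh, h)` from the composable pairs with `r(g) = y` to the pairs
`(a, h)` with `r(a) = y` and `s(h) = s(a)`. It turns sums over composable pairs into the sums
defining convolutions; on both sides `h` is stored without the endpoint it shares with the first
component. -/
def composablePairEquiv (y : Ω) :
    (Σ g : GpdFiber Ω y, GpdFiber Ω g.1) ≃ (Σ a : GpdFiber Ω y, Σ w : Ω, (a.1 ⟶ w)) where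
  toFun q := ⟨⟨q.2.1, q.2.2 ≫ q.1.2⟩, ⟨q.1.1, q.2.2⟩⟩
  invFun q := ⟨⟨q.2.1, Groupoid.inv q.2.2 ≫ q.1.2⟩, ⟨q.1.1, q.2.2⟩⟩
  left_inv := by
    rintro ⟨⟨z, g⟩, ⟨w, h⟩⟩
    simp
  right_inv := by
    rintro ⟨⟨z, a⟩, ⟨w, h⟩⟩
    simp

@[simp]
lemma composablePairEquiv_symm_apply (y : Ω) (p : Σ a : GpdFiber Ω y, Σ w : Ω, (a.1 ⟶ w)) :
    (composablePairEquiv y).symm p =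
      ⟨⟨p.2.1, Groupoid.inv p.2.2 ≫ p.1.2⟩, ⟨p.1.1, p.2.2⟩⟩ :=
  rfl

/-- Left multiplication `h ↦ gh` as a bijection `𝒢^{s(g)} ≃ 𝒢^{r(g)}`, used to move functions
between fibers. -/
def mulLeftEquiv {x y : Ω} (g : x ⟶ y) : GpdFiber Ω x ≃ GpdFiber Ω y where
  toFun a := ⟨a.1, a.2 ≫ g⟩
  invFun a := ⟨a.1, a.2 ≫ Groupoid.inv g⟩
  left_inv a := by simp
  right_inv a := by simp

@[simp]
lemma mulLeftEquiv_apply {x y : Ω} (g : x ⟶ y) (a : GpdFiber Ω x) :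
    mulLeftEquiv g a = ⟨a.1, a.2 ≫ g⟩ :=
  rfl

lemma translateF_eq_comp {x y : Ω} (g : x ⟶ y) (ν : GpdFiber Ω x → ℝ) :
    translateF g ν = ν ∘ (mulLeftEquiv g).symm :=
  rfl

lemma summable_translateF {x y : Ω} {ν : GpdFiber Ω x → ℝ} (hν : Summable ν) (g : x ⟶ y) :
    Summable (translateF g ν) :=
  (mulLeftEquiv g).symm.summable_iff.mpr hν

lemma hasSum_mul_translateF_iff {x y : Ω} {g : x ⟶ y} {F : GpdFiber Ω y → ℝ}
    {ν : GpdFiber Ω x → ℝ} {s : ℝ} :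
    HasSum (fun a => F a * translateF g ν a) s ↔
      HasSum (fun a => F (mulLeftEquiv g a) * ν a) s := by
  rw [← (mulLeftEquiv g).hasSum_iff]
  simp only [translateF_eq_comp, Function.comp_def, Equiv.symm_apply_apply]

lemma hasSum_mul_diracF {y : Ω} (F : GpdFiber Ω y → ℝ) (g : GpdFiber Ω y) :
    HasSum (fun a => F a * diracF g a) (F g) := by
  have hoff : ∀ a, a ≠ g → F a * diracF g a = 0 := fun a ha => by simp [diracF, ha]
  simpa [diracF] using hasSum_single g hoff

lemma markovOp_comp_mulLeftEquiv {x y : Ω} (μ : ∀ z : Ω, GpdFiber Ω z → ℝ)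
    (F : GpdFiber Ω y → ℝ) (g : x ⟶ y) :
    markovOp μ (F ∘ mulLeftEquiv g) = markovOp μ F ∘ mulLeftEquiv g := by
  funext a
  simp only [markovOp, Function.comp_apply, mulLeftEquiv_apply, Category.assoc]

namespace IsProbFamily

variable {μ : ∀ y : Ω, GpdFiber Ω y → ℝ} {x y : Ω} {ν F : GpdFiber Ω y → ℝ}
  {f : GpdFiber Ω x → ℝ} {C : ℝ}

lemma summable_sigma_mul (hμ : IsProbFamily μ) (hν : Summable ν) :
    Summable fun q : Σ g : GpdFiber Ω y, GpdFiber Ω g.1 => ν q.1 * μ q.1.1 q.2 := by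
  refine Summable.of_abs ((summable_sigma_of_nonneg fun _ => abs_nonneg _).mpr ⟨fun g => ?_, ?_⟩)
  · exact ((hμ.2 g.1).summable.mul_left (ν g)).abs
  · have hfiber : ∀ g : GpdFiber Ω y, ∑' h, |ν g * μ g.1 h| = |ν g| := fun g => by
      simp only [abs_mul, abs_of_nonneg (hμ.1 g.1 _), tsum_mul_left, (hμ.2 g.1).tsum_eq, mul_one]
    simpa only [hfiber] using hν.abs

lemma summable_sigma_mul_mul (hμ : IsProbFamily μ) (hν : Summable ν) (hC : ∀ a, |F a| ≤ C) :
    Summable fun q : Σ g : GpdFiber Ω y, GpdFiber Ω g.1 =>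
      F (mulLeftEquiv q.1.2 q.2) * (ν q.1 * μ q.1.1 q.2) := by
  refine Summable.of_norm_bounded ((hμ.summable_sigma_mul hν).abs.mul_left C) fun q => ?_
  rw [Real.norm_eq_abs, abs_mul]
  exact mul_le_mul_of_nonneg_right (hC _) (abs_nonneg _)

-- Both sides are the sum of `F(gh) ν(g) μ^{s(g)}(h)` over composable pairs `(g, h)`.
lemma hasSum_mul_convF (hμ : IsProbFamily μ) (hν : Summable ν) (hC : ∀ a, |F a| ≤ C) :
    HasSum (fun a => F a * convF ν μ a) (∑' g, markovOp μ F g * ν g) := by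
  have hpairs := hμ.summable_sigma_mul_mul hν hC
  have hmarkov : ∑' g, markovOp μ F g * ν g =
      ∑' q : Σ g : GpdFiber Ω y, GpdFiber Ω g.1,
        F (mulLeftEquiv q.1.2 q.2) * (ν q.1 * μ q.1.1 q.2) := by
    rw [hpairs.tsum_sigma]
    refine tsum_congr fun g => ?_
    rw [markovOp, ← tsum_mul_right]
    exact tsum_congr fun h => by rw [mulLeftEquiv_apply]; ring
  rw [hmarkov]
  refine ((composablePairEquiv y).symm.hasSum_iff.mpr hpairs.hasSum).sigma fun a => ?_
  have hfactor := ((composablePairEquiv y).symm.summable_iff.mpr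
    (hμ.summable_sigma_mul hν)).sigma_factor a
  simpa [convF, Function.comp_def] using hfactor.hasSum.mul_left (F a)

lemma summable_convF (hμ : IsProbFamily μ) (hν : Summable ν) : Summable (convF ν μ) := by
  simpa only [one_mul] using
    (hμ.hasSum_mul_convF (F := fun _ => 1) hν fun _ => abs_one.le).summable

lemma summable_convPow (hμ : IsProbFamily μ) (n : ℕ) (y : Ω) : Summable (convPow μ n y) := by
  induction n with
  | zero => simpa only [one_mul, convPow] using (hasSum_mul_diracF (fun _ => 1) ⟨y, 𝟙 y⟩).summable
  | succ n ih => exact hμ.summable_convF ih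

lemma hasSum_mul_convPow (hμ : IsProbFamily μ) (hC : ∀ a, |F a| ≤ C) (hF : markovOp μ F = F)
    (n : ℕ) : HasSum (fun a => F a * convPow μ n y a) (F ⟨y, 𝟙 y⟩) := by
  induction n with
  | zero => exact hasSum_mul_diracF F ⟨y, 𝟙 y⟩
  | succ n ih =>
    have hconv := hμ.hasSum_mul_convF (hμ.summable_convPow n y) hC
    rwa [hF, ih.tsum_eq] at hconv

lemma hasSum_mul_translateF_convPow (hμ : IsProbFamily μ) (hC : ∀ a, |f a| ≤ C)
    (hf : markovOp μ f = f) (g : GpdFiber Ω x) (n : ℕ) :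
    HasSum (fun a => f a * translateF g.2 (convPow μ n g.1) a) (f g) := by
  have hharmonic : markovOp μ (f ∘ mulLeftEquiv g.2) = f ∘ mulLeftEquiv g.2 := by
    rw [markovOp_comp_mulLeftEquiv, hf]
  rw [hasSum_mul_translateF_iff]
  simpa using hμ.hasSum_mul_convPow (fun a => hC (mulLeftEquiv g.2 a)) hharmonic n

lemma abs_sub_le_mul_tsum_abs_translateF_sub (hμ : IsProbFamily μ) (hC : ∀ a, |f a| ≤ C)
    (hf : markovOp μ f = f) (g : GpdFiber Ω x) (m n : ℕ) :
    |f g - f ⟨x, 𝟙 x⟩| ≤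
      C * ∑' a, |translateF g.2 (convPow μ m g.1) a - convPow μ n x a| :=
  abs_sub_le_mul_tsum_abs_sub hC (summable_translateF (hμ.summable_convPow m g.1) g.2)
    (hμ.summable_convPow n x) (hμ.hasSum_mul_translateF_convPow hC hf g m)
    (hμ.hasSum_mul_convPow hC hf n)

end IsProbFamily

theorem markovOp_liouville_general (μ : ∀ y : Ω, GpdFiber Ω y → ℝ) (hμ : IsProbFamily μ) (x : Ω)
    (hReiter : ∀ g : GpdFiber Ω x, ∀ ε > 0, ∃ m n,
      ∑' a, |translateF g.2 (convPow μ m g.1) a - convPow μ n x a| < ε) :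
    ∀ f : GpdFiber Ω x → ℝ, (∃ C, ∀ a, |f a| ≤ C) → markovOp μ f = f →
      ∀ a b, f a = f b := by
  rintro f ⟨C, hC⟩ hf
  have hC' : ∀ a, |f a| ≤ max C 1 := fun a => (hC a).trans (le_max_left C 1)
  have hpos : 0 < max C 1 := zero_lt_one.trans_le (le_max_right C 1)
  have hunit : ∀ g, f g = f ⟨x, 𝟙 x⟩ := fun g => eq_of_forall_dist_le fun ε hε => by
    obtain ⟨m, n, hmn⟩ := hReiter g (ε / max C 1) (div_pos hε hpos)
    exact (hμ.abs_sub_le_mul_tsum_abs_translateF_sub hC' hf g m n).trans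
      ((le_div_iff₀' hpos).mp hmn.le)
  exact fun a b => (hunit a).trans (hunit b).symm

end Groupoid

/-- if `μ` satisfies the Reiter condition at `x`, then `P_μ^x` is Liouville:
every bounded `P_μ^x`-harmonic function on `𝒢^x` is constant. -/
theorem markovOp_liouville {Ω : Type*} [Groupoid Ω]
    [∀ x : Ω, Countable (GpdFiber Ω x)]
    (μ : ∀ y : Ω, GpdFiber Ω y → ℝ) (hμ : IsProbFamily μ) (x : Ω)
    (hReiter : ∀ g : GpdFiber Ω x,
      Filter.Tendsto
        (fun n => ∑' a, |translateF g.2 (convPow μ n g.1) a - convPow μ n x a|)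
        Filter.atTop (nhds 0)) :
    ∀ f : GpdFiber Ω x → ℝ, (∃ C, ∀ a, |f a| ≤ C) → markovOp μ f = f →
      ∀ a b, f a = f b := by
  refine markovOp_liouville_general μ hμ x fun g ε hε => ?_
  obtain ⟨n, hn⟩ := ((hReiter g).eventually_lt_const hε).exists
  exact ⟨n, n, hn⟩
end

section
/- Let c be a normalized 𝕋-valued 3-cocycle on the discrete groupoid 𝒢. For every n ≥ 1, every composable pair (k,l) in 𝒢, and every g with r(g)=r(k): c(g,g⁻¹k,l)·(I_{n+1}(k,l) ∘ (u_g^n(k)⊗1)) = u_g^{n+1}(kl) ∘ I_{n+1}(g⁻¹k,l), as linear maps from complex-valued functions on 𝒢^{s(g),(n+1)}_{s(l)} to complex-valued functions on 𝒢^{r(g),(n+1)}_{s(l)}. -/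
open CategoryTheory ComplexConjugate

universe u

/-- `Tup Ω n x y` is the set `𝒢^{x,(n+1)}_y` of composable `(n+1)`-tuples
`(t₁, …, t_{n+1})` with `r(t₁) = x`, `s(t_i) = r(t_{i+1})` and `s(t_{n+1}) = y`
(morphism composition convention: the groupoid product `g h` is `h ≫ g`). -/
def Tup (Ω : Type u) [Groupoid.{u} Ω] : ℕ → Ω → Ω → Type u
  | 0, x, y => y ⟶ x
  | n + 1, x, y => Σ w : Ω, (w ⟶ x) × Tup Ω n w y

/-- The first entry `t₁` of a composable tuple, as an element of `𝒢^x`. -/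
def Tup.head {Ω : Type u} [Groupoid.{u} Ω] : ∀ {n : ℕ} {x y : Ω}, Tup Ω n x y → Σ w : Ω, w ⟶ x
  | 0, _, y, t => ⟨y, t⟩
  | _ + 1, _, _, t => ⟨t.1, t.2.1⟩

/-- The action `g𝒕 = (g t₁, t₂, …)` of `g` with `s(g) = r(t₁)` on composable tuples. -/
def Tup.act {Ω : Type u} [Groupoid.{u} Ω] :
    ∀ {n : ℕ} {x x' y : Ω}, (x ⟶ x') → Tup Ω n x y → Tup Ω n x' y
  | 0, _, _, _, g, t => t ≫ g
  | _ + 1, _, _, _, g, t => ⟨t.1, t.2.1 ≫ g, t.2.2⟩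

/-- The range of the last entry of a composable tuple. -/
def Tup.last {Ω : Type u} [Groupoid.{u} Ω] : ∀ {n : ℕ} {x y : Ω}, Tup Ω n x y → Ω
  | 0, x, _, _ => x
  | _ + 1, _, _, t => Tup.last t.2.2

/-- The last entry of a composable tuple. -/
def Tup.lastHom {Ω : Type u} [Groupoid.{u} Ω] : ∀ {n : ℕ} {x y : Ω} (t : Tup Ω n x y), y ⟶ t.last
  | 0, _, _, t => t
  | _ + 1, _, _, t => Tup.lastHom t.2.2

/-- A normalized `𝕋`-valued 3-cocycle on the discrete groupoid `Ω`:  `c g h k` is defined for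
composable triples (`s(g) = r(h)`, `s(h) = r(k)`), has modulus one, satisfies the 3-cocycle
identity, and is `1` whenever one of the arguments is a unit. -/
structure GpdCocycle (Ω : Type u) [Groupoid.{u} Ω] where
  c : ∀ {a b cc d : Ω}, (cc ⟶ d) → (b ⟶ cc) → (a ⟶ b) → ℂ
  abs_one : ∀ {a b cc d : Ω} (g : cc ⟶ d) (h : b ⟶ cc) (k : a ⟶ b), ‖c g h k‖ = 1
  identity : ∀ {a b cc d e : Ω} (g : d ⟶ e) (h : cc ⟶ d) (k : b ⟶ cc) (l : a ⟶ b),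
    c g h k * conj (c g h (l ≫ k)) * c g (k ≫ h) l * conj (c (h ≫ g) k l) * c h k l = 1
  norm₁ : ∀ {a b cc : Ω} (h : b ⟶ cc) (k : a ⟶ b), c (𝟙 cc) h k = 1
  norm₂ : ∀ {a b : Ω} {cc : Ω} (g : b ⟶ cc) (k : a ⟶ b), c g (𝟙 b) k = 1
  norm₃ : ∀ {a b cc : Ω} (g : b ⟶ cc) (h : a ⟶ b), c g h (𝟙 a) = 1

/-- The unitary `u_g^n(k)` (for `r(k') = r(g)`): it sends a function `ξ` on
`𝒢^{s(g),(n)}_z` to the function on `𝒢^{r(g),(n)}_z` with `(u_g^n(k)ξ)(g𝒕) =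
c(g, t₁, t₁⁻¹g⁻¹k)·ξ(𝒕)`.  (The auxiliary element `k` may have any source.) -/
def uMap {Ω : Type u} [Groupoid.{u} Ω] (C : GpdCocycle Ω) {n : ℕ} {c d z z' : Ω}
    (g : c ⟶ d) (k : z' ⟶ d) (ξ : Tup Ω n c z → ℂ) : Tup Ω n d z → ℂ :=
  fun s =>
    C.c g (Tup.head (Tup.act (Groupoid.inv g) s)).2
        (k ≫ Groupoid.inv g ≫ Groupoid.inv (Tup.head (Tup.act (Groupoid.inv g) s)).2) *
      ξ (Tup.act (Groupoid.inv g) s)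

/-- The inverse of `u_g^n(k)`:  `((u_g^n(k))⁻¹ξ)(𝒕) = conj(c(g,t₁,t₁⁻¹g⁻¹k))·ξ(g𝒕)`. -/
def uMapInv {Ω : Type u} [Groupoid.{u} Ω] (C : GpdCocycle Ω) {n : ℕ} {c d z z' : Ω}
    (g : c ⟶ d) (k : z' ⟶ d) (ξ : Tup Ω n d z → ℂ) : Tup Ω n c z → ℂ :=
  fun t =>
    conj (C.c g (Tup.head t).2 (k ≫ Groupoid.inv g ≫ Groupoid.inv (Tup.head t).2)) *
      ξ (Tup.act g t)

/-- The unitary `w^n(g,h)`: `(w^n(g,h)ξ)(𝒔) = conj(c(g,h,h⁻¹g⁻¹s₁))·ξ(𝒔)` on functions on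
`𝒢^{r(g),(n)}_z`. -/
def wMap {Ω : Type u} [Groupoid.{u} Ω] (C : GpdCocycle Ω) {n : ℕ} {b c d z : Ω}
    (g : c ⟶ d) (h : b ⟶ c) (ξ : Tup Ω n d z → ℂ) : Tup Ω n d z → ℂ :=
  fun s => conj (C.c g h ((Tup.head s).2 ≫ Groupoid.inv g ≫ Groupoid.inv h)) * ξ s

/-- The inverse of `w^n(g,h)`. -/
def wMapInv {Ω : Type u} [Groupoid.{u} Ω] (C : GpdCocycle Ω) {n : ℕ} {b c d z : Ω}
    (g : c ⟶ d) (h : b ⟶ c) (ξ : Tup Ω n d z → ℂ) : Tup Ω n d z → ℂ :=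
  fun s => C.c g h ((Tup.head s).2 ≫ Groupoid.inv g ≫ Groupoid.inv h) * ξ s

/-- The unitary `I_{n+1}(k,l)` (for a composable pair `(k,l)`), acting on functions on
`𝒢^{r(k),(n+1)}_{s(l)}`:  `(I_{n+1}(k,l)ξ)(t₁,…,t_{n+1}) = conj(c(t₁,t₁⁻¹k,l))·ξ(t₁,…,t_n,l)`
if `t_{n+1} = l`, and `0` otherwise. -/
noncomputable def iMap {Ω : Type u} [Groupoid.{u} Ω] (C : GpdCocycle Ω) {m : ℕ} {a b d : Ω}
    (k : b ⟶ d) (l : a ⟶ b) (ξ : Tup Ω (m + 1) d a → ℂ) : Tup Ω (m + 1) d a → ℂ :=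
  fun t =>
    letI := Classical.propDecidable
      ((⟨Tup.last t, Tup.lastHom t⟩ : Σ w : Ω, a ⟶ w) = ⟨b, l⟩)
    if (⟨Tup.last t, Tup.lastHom t⟩ : Σ w : Ω, a ⟶ w) = ⟨b, l⟩ then
      conj (C.c (Tup.head t).2 (k ≫ Groupoid.inv (Tup.head t).2) l) * ξ t
    else 0

/-!
Left translation by `g` changes only the first entry of a tuple of length at least two, so both
sides at `g𝒕` are supported on the tuples with last entry `l`. There the coefficients of `ξ(𝒕)`
agree by the cocycle identity at `(g, t₁, t₁⁻¹g⁻¹k, l)`, in which the conjugate factors are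
inverses because `c` has modulus one.
-/

namespace GpdCocycle

variable {Ω : Type u} [Groupoid.{u} Ω] (C : GpdCocycle Ω)

lemma c_mul_conj_c {w x y z : Ω} (g : y ⟶ z) (h : x ⟶ y) (k : w ⟶ x) :
    C.c g h k * conj (C.c g h k) = 1 := by
  rw [Complex.mul_conj', C.abs_one, Complex.ofReal_one, one_pow]

lemma c_mul_conj_c_mul_c {v w x y z : Ω} (g : y ⟶ z) (h : x ⟶ y) (k : w ⟶ x) (l : v ⟶ w) :
    C.c g (k ≫ h) l * conj (C.c (h ≫ g) k l) * C.c g h k =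
      C.c g h (l ≫ k) * conj (C.c h k l) := by
  calc C.c g (k ≫ h) l * conj (C.c (h ≫ g) k l) * C.c g h k
      = (C.c g h (l ≫ k) * conj (C.c g h (l ≫ k))) * (C.c h k l * conj (C.c h k l)) *
          (C.c g (k ≫ h) l * conj (C.c (h ≫ g) k l) * C.c g h k) := by
        simp only [c_mul_conj_c, one_mul]
    _ = C.c g h (l ≫ k) * conj (C.c h k l) *
          (C.c g h k * conj (C.c g h (l ≫ k)) * C.c g (k ≫ h) l *
            conj (C.c (h ≫ g) k l) * C.c h k l) := by ring
    _ = C.c g h (l ≫ k) * conj (C.c h k l) := by rw [C.identity, mul_one]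

end GpdCocycle

namespace Tup

variable {Ω : Type u} [Groupoid.{u} Ω]

lemma act_id {n : ℕ} {x y : Ω} (t : Tup Ω n x y) : act (𝟙 x) t = t :=
  match n, t with
  | 0, t => Category.comp_id (t : y ⟶ x)
  | n + 1, ⟨w, h, t⟩ => congrArg (fun h' ↦ (⟨w, h', t⟩ : Tup Ω (n + 1) x y)) (Category.comp_id h)

lemma act_act {n : ℕ} {x x' x'' y : Ω} (g : x ⟶ x') (g' : x' ⟶ x'') (t : Tup Ω n x y) :
    act g' (act g t) = act (g ≫ g') t :=
  match n, t with
  | 0, t => Category.assoc (t : y ⟶ x) g g'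
  | n + 1, ⟨w, h, t⟩ =>
    congrArg (fun h' ↦ (⟨w, h', t⟩ : Tup Ω (n + 1) x'' y)) (Category.assoc h g g')

lemma act_inv_act {n : ℕ} {x x' y : Ω} (g : x ⟶ x') (t : Tup Ω n x y) :
    act (Groupoid.inv g) (act g t) = t := by
  rw [act_act, Groupoid.comp_inv, act_id]

lemma act_act_inv {n : ℕ} {x x' y : Ω} (g : x ⟶ x') (t : Tup Ω n x' y) :
    act g (act (Groupoid.inv g) t) = t := by
  rw [act_act, Groupoid.inv_comp, act_id]

lemma act_surjective {n : ℕ} {x x' y : Ω} (g : x ⟶ x') :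
    Function.Surjective (act g : Tup Ω n x y → Tup Ω n x' y) :=
  fun t ↦ ⟨act (Groupoid.inv g) t, act_act_inv g t⟩

lemma head_act {n : ℕ} {x x' y : Ω} (g : x ⟶ x') (t : Tup Ω n x y) :
    head (act g t) = ⟨(head t).1, (head t).2 ≫ g⟩ := by
  cases n <;> rfl

/-- The last entry of a composable tuple bundled with its range, so that the last entries of
arbitrary tuples with a common source can be compared. -/
def lastEntry {n : ℕ} {x y : Ω} (t : Tup Ω n x y) : Σ w : Ω, y ⟶ w :=
  ⟨t.last, t.lastHom⟩

lemma lastEntry_act {n : ℕ} {x x' y : Ω} (g : x ⟶ x') (t : Tup Ω (n + 1) x y) :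
    lastEntry (act g t) = lastEntry t :=
  rfl

end Tup

section OperatorsOnTuples

variable {Ω : Type u} [Groupoid.{u} Ω] (C : GpdCocycle Ω)

lemma uMap_act {n : ℕ} {x x' y z : Ω} (g : x ⟶ x') (k : z ⟶ x') (ξ : Tup Ω n x y → ℂ)
    (t : Tup Ω n x y) :
    uMap C g k ξ (t.act g) =
      C.c g t.head.2 (k ≫ Groupoid.inv g ≫ Groupoid.inv t.head.2) * ξ t := by
  rw [uMap, Tup.act_inv_act]

lemma iMap_of_lastEntry_eq {m : ℕ} {a b d : Ω} {k : b ⟶ d} {l : a ⟶ b}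
    (ξ : Tup Ω (m + 1) d a → ℂ) {t : Tup Ω (m + 1) d a} (hl : t.lastEntry = ⟨b, l⟩) :
    iMap C k l ξ t = conj (C.c t.head.2 (k ≫ Groupoid.inv t.head.2) l) * ξ t :=
  if_pos hl

lemma iMap_of_lastEntry_ne {m : ℕ} {a b d : Ω} {k : b ⟶ d} {l : a ⟶ b}
    (ξ : Tup Ω (m + 1) d a → ℂ) {t : Tup Ω (m + 1) d a} (hl : t.lastEntry ≠ ⟨b, l⟩) :
    iMap C k l ξ t = 0 :=
  if_neg hl

lemma iMap_act_of_lastEntry_eq {m : ℕ} {a b x x' : Ω} (g : x ⟶ x') {k : b ⟶ x'} {l : a ⟶ b}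
    (ξ : Tup Ω (m + 1) x' a → ℂ) {t : Tup Ω (m + 1) x a} (hl : t.lastEntry = ⟨b, l⟩) :
    iMap C k l ξ (t.act g) =
      conj (C.c (t.head.2 ≫ g) (k ≫ Groupoid.inv g ≫ Groupoid.inv t.head.2) l) *
        ξ (t.act g) := by
  have hinv : Groupoid.inv (t.head.2 ≫ g) = Groupoid.inv g ≫ Groupoid.inv t.head.2 := by
    simp only [Groupoid.inv_eq_inv, IsIso.inv_comp]
  rw [iMap_of_lastEntry_eq C ξ ((Tup.lastEntry_act g t).trans hl), Tup.head_act, hinv]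

end OperatorsOnTuples

/-- `c(g,g⁻¹k,l)·(I_{n+1}(k,l) ∘ (u_g^n(k)⊗1)) = u_g^{n+1}(kl) ∘ I_{n+1}(g⁻¹k,l)`
for every `n ≥ 1` (tuples of length `n + 1 = m + 2`), every composable pair `(k,l)` and every
`g` with `r(g) = r(k)`. -/
theorem iMap_uMap_comp {Ω : Type u} [Groupoid.{u} Ω] (C : GpdCocycle Ω)
    {a b cc d : Ω} (k : b ⟶ d) (l : a ⟶ b) (g : cc ⟶ d) (m : ℕ)
    (ξ : Tup Ω (m + 1) cc a → ℂ) (t : Tup Ω (m + 1) d a) :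
    C.c g (k ≫ Groupoid.inv g) l * iMap C k l (uMap C g k ξ) t =
      uMap C g (l ≫ k) (iMap C (k ≫ Groupoid.inv g) l ξ) t := by
  obtain ⟨t, rfl⟩ := Tup.act_surjective g t
  rw [uMap_act]
  by_cases hl : t.lastEntry = ⟨b, l⟩
  · rw [iMap_act_of_lastEntry_eq C g _ hl, uMap_act, iMap_of_lastEntry_eq C ξ hl]
    have cocycle := C.c_mul_conj_c_mul_c g t.head.2 (k ≫ Groupoid.inv g ≫ Groupoid.inv t.head.2) l
    simp only [Category.assoc, Groupoid.inv_comp, Category.comp_id] at cocycle ⊢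
    linear_combination ξ t * cocycle
  · have hgl : (t.act g).lastEntry ≠ ⟨b, l⟩ := Tup.lastEntry_act g t ▸ hl
    rw [iMap_of_lastEntry_ne C _ hgl, iMap_of_lastEntry_ne C ξ hl, mul_zero, mul_zero]
end
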